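/- arXiv:1207.6371 — 3 statements merged into one kernel-verified Lean document; each statement's English description precedes it below -/
import Mathlib

section
/- Let G be a weighted graph with terminal set K. If X ⊆ Y ⊆ K, then S(X) ⊆ S(Y); that is, any minimum-cardinality minimizer realizing h_K^G(X) is contained in any minimum-cardinality minimizer realizing h_K^G(Y). -/
open scoped Classical

/-- A weighted graph with a distinguished embedded set of terminals indexed by `κ`:
a finite vertex type `V`, an embedding `ι : κ ↪ V` of the terminals, and a symmetric
nonnegative capacity function `c` on pairs of vertices. -/
structure WeightedGraph (κ : Type) where
  V : Type
  [fintypeV : Fintype V]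
  ι : κ ↪ V
  c : V → V → ℝ
  symm : ∀ u v, c u v = c v u
  nonneg : ∀ u v, 0 ≤ c u v

namespace WeightedGraph

variable {κ : Type}

instance (G : WeightedGraph κ) : Fintype G.V := G.fintypeV

/-- The cut function `h_G(A) = Σ_{u ∈ A, v ∉ A} c(u,v)`. -/
noncomputable def cutval (G : WeightedGraph κ) (A : Finset G.V) : ℝ :=
  ∑ u ∈ A, ∑ v ∈ Aᶜ, G.c u v

/-- The vertex sets realizing the terminal partition `(U, K \ U)`. -/
noncomputable def cutSets (G : WeightedGraph κ) (U : Finset κ) : Finset (Finset G.V) :=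
  Finset.univ.filter fun A => ∀ x : κ, G.ι x ∈ A ↔ x ∈ U

theorem cutSets_nonempty (G : WeightedGraph κ) (U : Finset κ) : (G.cutSets U).Nonempty := by
  refine ⟨U.image G.ι, ?_⟩
  simp [cutSets, Finset.mem_image, G.ι.injective.eq_iff]

/-- The terminal cut function `h_K^G(U) = min { h_G(A) : A ∩ K = U }`. -/
noncomputable def termCut (G : WeightedGraph κ) (U : Finset κ) : ℝ :=
  (G.cutSets U).inf' (G.cutSets_nonempty U) G.cutval

/-- `H` is a mimicking network for `(G, K)`: all minimum terminal cut values agree. -/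
def IsMimicking (G H : WeightedGraph κ) : Prop :=
  ∀ U : Finset κ, H.termCut U = G.termCut U

/-- `H` is a quotient (contraction) of `G` along the surjection `f`: terminals map to
terminals, and capacities between distinct classes are sums of the original capacities. -/
def IsQuotient (G H : WeightedGraph κ) (f : G.V → H.V) : Prop :=
  Function.Surjective f ∧ (∀ x : κ, f (G.ι x) = H.ι x) ∧
    ∀ y z : H.V, y ≠ z →
      H.c y z = ∑ u ∈ Finset.univ.filter (fun u => f u = y),
        ∑ v ∈ Finset.univ.filter (fun v => f v = z), G.c u v

end WeightedGraph

/-- `A` is a minimum-cardinality minimizer realizing the minimum terminal cut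
`h_K^G(U)`: it induces the terminal partition `(U, K \ U)`, achieves the minimum cut
value, and has minimum cardinality among all such minimizers. -/
def WeightedGraph.IsMinCutSet {κ : Type} (G : WeightedGraph κ) (U : Finset κ)
    (A : Finset G.V) : Prop :=
  (∀ x : κ, G.ι x ∈ A ↔ x ∈ U) ∧ G.cutval A = G.termCut U ∧
    ∀ B : Finset G.V, (∀ x : κ, G.ι x ∈ B ↔ x ∈ U) → G.cutval B = G.termCut U →
      A.card ≤ B.card

theorem WeightedGraph.cutval_eq_ite {κ : Type} (G : WeightedGraph κ) (A : Finset G.V) :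
    G.cutval A = ∑ u, ∑ v, if u ∈ A ∧ v ∉ A then G.c u v else 0 := by
  unfold WeightedGraph.cutval
  rw [← Finset.sum_filter_add_sum_filter_not Finset.univ (fun u => u ∈ A)
    (fun u => ∑ v, if u ∈ A ∧ v ∉ A then G.c u v else 0)]
  have h2 : ∑ u ∈ Finset.univ.filter (fun u => ¬ u ∈ A),
      (∑ v, if u ∈ A ∧ v ∉ A then G.c u v else 0) = 0 := by
    refine Finset.sum_eq_zero fun u hu => Finset.sum_eq_zero fun v _ => ?_
    have hu' : u ∉ A := by simpa using hu
    simp [hu']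
  rw [h2, add_zero]
  refine Finset.sum_congr (by ext; simp) fun u hu => ?_
  have hu' : u ∈ A := by simpa using hu
  simp only [hu', true_and]
  rw [← Finset.sum_filter]
  exact Finset.sum_congr (by ext; simp) fun _ _ => rfl

theorem WeightedGraph.cutval_submodular {κ : Type} (G : WeightedGraph κ) (A B : Finset G.V) :
    G.cutval (A ∩ B) + G.cutval (A ∪ B) ≤ G.cutval A + G.cutval B := by
  simp only [WeightedGraph.cutval_eq_ite, ← Finset.sum_add_distrib]
  refine Finset.sum_le_sum fun u _ => Finset.sum_le_sum fun v _ => ?_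
  have := G.nonneg u v
  by_cases h1 : u ∈ A <;> by_cases h2 : u ∈ B <;> by_cases h3 : v ∈ A <;>
    by_cases h4 : v ∈ B <;> simp [h1, h2, h3, h4, this]

theorem WeightedGraph.termCut_le {κ : Type} (G : WeightedGraph κ) (U : Finset κ)
    (A : Finset G.V) (h : ∀ x : κ, G.ι x ∈ A ↔ x ∈ U) : G.termCut U ≤ G.cutval A :=
  Finset.inf'_le _ (by simpa [WeightedGraph.cutSets] using h)

/-- if `X ⊆ Y ⊆ K` then `S(X) ⊆ S(Y)` for any minimum-cardinality
minimizers `S(X)`, `S(Y)` realizing `h_K^G(X)` and `h_K^G(Y)`. -/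
theorem minCutSet_subset_of_subset {κ : Type} (G : WeightedGraph κ)
    (X Y : Finset κ) (hXY : X ⊆ Y) (SX SY : Finset G.V)
    (hSX : G.IsMinCutSet X SX) (hSY : G.IsMinCutSet Y SY) :
    SX ⊆ SY := by
  obtain ⟨hX1, hX2, hX3⟩ := hSX
  obtain ⟨hY1, hY2, hY3⟩ := hSY
  have hI : ∀ x : κ, G.ι x ∈ SX ∩ SY ↔ x ∈ X := fun x => by
    rw [Finset.mem_inter, hX1, hY1]
    exact ⟨fun h => h.1, fun h => ⟨h, hXY h⟩⟩
  have hU : ∀ x : κ, G.ι x ∈ SX ∪ SY ↔ x ∈ Y := fun x => by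
    rw [Finset.mem_union, hX1, hY1]
    exact ⟨fun h => h.elim (fun h => hXY h) id, Or.inr⟩
  have h1 := G.termCut_le X _ hI
  have h2 := G.termCut_le Y _ hU
  have h3 := G.cutval_submodular SX SY
  have h4 := hX3 _ hI (by linarith)
  exact Finset.inter_eq_left.mp (Finset.eq_of_subset_of_card_le Finset.inter_subset_left h4)
end

section
/- Fix a finite terminal set K of size k. The set M_k of minimum terminal cut vectors of all weighted graphs with terminal set K is a convex cone in ℝ^p, where p = 2^{k−1}−1: it contains 0, is closed under multiplication by nonnegative scalars, and is closed under addition (equivalently, under convex combinations). -/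
open scoped Classical

/-- The index set of the `p = 2^(k-1) - 1` terminal cuts: nonempty subsets `U ⊆ K`
avoiding the fixed terminal `t` (= `v_k`). -/
def CutIndex (κ : Type) (t : κ) := {U : Finset κ // U.Nonempty ∧ t ∉ U}

/-- The minimum terminal cut vector (MTCV) of `G`: the vector of all minimum terminal
cut values, indexed by `CutIndex κ t`. -/
noncomputable def mtcv {κ : Type} (G : WeightedGraph κ) (t : κ) : CutIndex κ t → ℝ :=
  fun U => G.termCut U.1

/-- `M_k`: the set of minimum terminal cut vectors of all weighted graphs with
terminal set `K` (indexed by `κ`). -/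
def MTCVSet (κ : Type) (t : κ) : Set (CutIndex κ t → ℝ) :=
  {m | ∃ G : WeightedGraph κ, m = mtcv G t}

namespace WeightedGraph

variable {κ : Type}

theorem mem_cutSets_iff (G : WeightedGraph κ) (U : Finset κ) (A : Finset G.V) :
    A ∈ G.cutSets U ↔ ∀ x : κ, G.ι x ∈ A ↔ x ∈ U := by
  simp [cutSets]

theorem termCut_le_s10 (G : WeightedGraph κ) (U : Finset κ) (A : Finset G.V)
    (hA : A ∈ G.cutSets U) : G.termCut U ≤ G.cutval A :=
  Finset.inf'_le _ hA

theorem exists_termCut (G : WeightedGraph κ) (U : Finset κ) :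
    ∃ A ∈ G.cutSets U, G.termCut U = G.cutval A :=
  Finset.exists_mem_eq_inf' _ _

theorem termCut_eq (G : WeightedGraph κ) (U : Finset κ) (r : ℝ)
    (h1 : ∃ A ∈ G.cutSets U, G.cutval A = r) (h2 : ∀ A ∈ G.cutSets U, r ≤ G.cutval A) :
    G.termCut U = r := by
  obtain ⟨A, hA, rfl⟩ := h1
  exact le_antisymm (G.termCut_le_s10 U A hA) (Finset.le_inf' _ _ h2)

/-- The edgeless graph on the terminals. -/
def zeroGraph (κ : Type) [Fintype κ] : WeightedGraph κ where
  V := κ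
  ι := Function.Embedding.refl κ
  c := fun _ _ => 0
  symm := fun _ _ => rfl
  nonneg := fun _ _ => le_refl _

theorem zeroGraph_cutval (κ : Type) [Fintype κ] (A : Finset (zeroGraph κ).V) :
    (zeroGraph κ).cutval A = 0 :=
  Finset.sum_eq_zero fun _ _ => Finset.sum_eq_zero fun _ _ => rfl

/-- Scaling all capacities. -/
def scale (G : WeightedGraph κ) (a : ℝ) (ha : 0 ≤ a) : WeightedGraph κ where
  V := G.V
  ι := G.ι
  c := fun u v => a * G.c u v
  symm := fun u v => by rw [G.symm]
  nonneg := fun u v => mul_nonneg ha (G.nonneg u v)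

theorem scale_cutval (G : WeightedGraph κ) (a : ℝ) (ha : 0 ≤ a) (A : Finset G.V) :
    (G.scale a ha).cutval A = a * G.cutval A := by
  simp only [cutval, Finset.mul_sum]
  rfl

theorem scale_termCut (G : WeightedGraph κ) (a : ℝ) (ha : 0 ≤ a) (U : Finset κ) :
    (G.scale a ha).termCut U = a * G.termCut U := by
  apply termCut_eq
  · obtain ⟨A, hA, h⟩ := G.exists_termCut U
    exact ⟨A, hA, by rw [h]; exact G.scale_cutval a ha A⟩
  · intro A hA
    rw [show (G.scale a ha).cutval A = a * G.cutval A from G.scale_cutval a ha A]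
    exact mul_le_mul_of_nonneg_left (G.termCut_le_s10 U A hA) ha

/-- Push the capacities of `G` forward along a map of vertices. -/
noncomputable def push (G : WeightedGraph κ) {W : Type} (f : G.V → W) (x y : W) : ℝ :=
  ∑ u, ∑ v, if f u = x ∧ f v = y then G.c u v else 0

theorem push_symm (G : WeightedGraph κ) {W : Type} (f : G.V → W) (x y : W) :
    G.push f x y = G.push f y x := by
  unfold push
  rw [Finset.sum_comm]
  refine Finset.sum_congr rfl fun u _ => Finset.sum_congr rfl fun v _ => ?_
  rw [G.symm v u]
  exact if_congr and_comm rfl rfl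

theorem push_nonneg (G : WeightedGraph κ) {W : Type} (f : G.V → W) (x y : W) :
    0 ≤ G.push f x y :=
  Finset.sum_nonneg fun u _ => Finset.sum_nonneg fun v _ => by
    split_ifs
    · exact G.nonneg u v
    · exact le_refl _

/-- Preimage of a vertex set. -/
noncomputable def pre {V W : Type} [Fintype V] (f : V → W) (A : Finset W) : Finset V :=
  Finset.univ.filter fun u => f u ∈ A

theorem mem_pre {V W : Type} [Fintype V] (f : V → W) (A : Finset W) (u : V) :
    u ∈ pre f A ↔ f u ∈ A := by
  simp [pre]

theorem push_cut (G : WeightedGraph κ) {W : Type} [Fintype W] (f : G.V → W) (A : Finset W) :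
    ∑ x ∈ A, ∑ y ∈ Aᶜ, G.push f x y = G.cutval (pre f A) := by
  have h1 : ∀ x, ∑ y ∈ Aᶜ, G.push f x y
      = ∑ u, ∑ v, if f u = x ∧ f v ∉ A then G.c u v else 0 := by
    intro x
    unfold push
    rw [Finset.sum_comm]
    refine Finset.sum_congr rfl fun u _ => ?_
    rw [Finset.sum_comm]
    refine Finset.sum_congr rfl fun v _ => ?_
    simp only [ite_and]
    by_cases h : f u = x <;> simp [h]
  simp only [h1]
  rw [Finset.sum_comm]
  unfold cutval pre
  rw [Finset.sum_filter]
  refine Finset.sum_congr rfl fun u _ => ?_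
  rw [Finset.sum_comm, Finset.compl_filter, Finset.sum_filter]
  by_cases h : f u ∈ A
  · rw [if_pos h]
    refine Finset.sum_congr rfl fun v _ => ?_
    simp only [ite_and]
    simp [h]
  · rw [if_neg h]
    refine Finset.sum_eq_zero fun v _ => Finset.sum_eq_zero fun x hx => if_neg ?_
    rintro ⟨rfl, -⟩
    exact h hx

theorem push_cut_add (G H : WeightedGraph κ) {W : Type} [Fintype W] (f : G.V → W) (g : H.V → W)
    (A : Finset W) :
    ∑ x ∈ A, ∑ y ∈ Aᶜ, (G.push f x y + H.push g x y)
      = G.cutval (pre f A) + H.cutval (pre g A) := by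
  rw [← push_cut, ← push_cut]
  simp only [Finset.sum_add_distrib]

/-- Map of the second graph into the glued vertex set: terminals are identified with
those of the first graph. -/
noncomputable def glueMap (G H : WeightedGraph κ) (v : H.V) : G.V ⊕ H.V :=
  if h : ∃ x, H.ι x = v then Sum.inl (G.ι h.choose) else Sum.inr v

theorem glueMap_terminal (G H : WeightedGraph κ) (x : κ) :
    glueMap G H (H.ι x) = Sum.inl (G.ι x) := by
  have h : ∃ y, H.ι y = H.ι x := ⟨x, rfl⟩
  unfold glueMap
  rw [dif_pos h, H.ι.injective h.choose_spec]

theorem glueMap_other (G H : WeightedGraph κ) (v : H.V) (h : ¬ ∃ x, H.ι x = v) :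
    glueMap G H v = Sum.inr v := dif_neg h

/-- Gluing two graphs along their terminals (the copies of the terminals in the second
graph are left as isolated vertices). -/
noncomputable def glue (G H : WeightedGraph κ) : WeightedGraph κ where
  V := G.V ⊕ H.V
  ι := G.ι.trans Function.Embedding.inl
  c := fun x y => G.push Sum.inl x y + H.push (glueMap G H) x y
  symm := fun x y => by rw [G.push_symm, H.push_symm]
  nonneg := fun x y => add_nonneg (G.push_nonneg _ _ _) (H.push_nonneg _ _ _)

theorem glue_cutval (G H : WeightedGraph κ) (A : Finset (G.V ⊕ H.V)) :
    (glue G H).cutval A = G.cutval (pre Sum.inl A) + H.cutval (pre (glueMap G H) A) :=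
  push_cut_add G H Sum.inl (glueMap G H) A

theorem glue_termCut (G H : WeightedGraph κ) (U : Finset κ) :
    (glue G H).termCut U = G.termCut U + H.termCut U := by
  apply termCut_eq
  · obtain ⟨A, hA, h⟩ := G.exists_termCut U
    obtain ⟨B, hB, h'⟩ := H.exists_termCut U
    rw [mem_cutSets_iff] at hA hB
    refine ⟨(A.disjSum B : Finset (G.V ⊕ H.V)), ?_, ?_⟩
    · refine (mem_cutSets_iff (glue G H) U _).2 fun x => ?_
      rw [← hA x]
      exact Finset.inl_mem_disjSum
    · refine (glue_cutval G H _).trans ?_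
      rw [h, h']
      congr 2
      · ext u
        simp [mem_pre]
      · ext v
        by_cases hv : ∃ x, H.ι x = v
        · obtain ⟨x, rfl⟩ := hv
          simp [mem_pre, glueMap_terminal, hA, hB]
        · simp [mem_pre, glueMap_other G H v hv]
  · intro A hA
    rw [mem_cutSets_iff] at hA
    have hA' : ∀ x, (Sum.inl (G.ι x) : G.V ⊕ H.V) ∈ (A : Finset (G.V ⊕ H.V)) ↔ x ∈ U := hA
    refine le_trans ?_ (glue_cutval G H A).ge
    refine add_le_add (termCut_le_s10 _ _ _ ?_) (termCut_le_s10 _ _ _ ?_)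
    · rw [mem_cutSets_iff]
      intro x
      exact (mem_pre _ _ _).trans (hA' x)
    · rw [mem_cutSets_iff]
      intro x
      refine (mem_pre _ _ _).trans ?_
      rw [glueMap_terminal]
      exact hA' x

end WeightedGraph

theorem card_cutIndex (κ : Type) [Fintype κ] (t : κ) :
    Nat.card (CutIndex κ t) = 2 ^ (Fintype.card κ - 1) - 1 := by
  have h : Nat.card (CutIndex κ t)
      = (((Finset.univ.erase t).powerset.erase ∅ : Finset (Finset κ))).card := by
    unfold CutIndex
    rw [Nat.card_eq_fintype_card, Fintype.card_subtype]
    congr 1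
    ext U
    simp [Finset.nonempty_iff_ne_empty, Finset.subset_erase]
  rw [h, Finset.card_erase_of_mem (by simp), Finset.card_powerset,
    Finset.card_erase_of_mem (Finset.mem_univ t), Finset.card_univ]

/-- `M_k` is a convex cone in `ℝ^p`, `p = 2^(k-1) - 1`: it contains `0`,
is closed under nonnegative scaling and under addition. -/
theorem mtcvSet_convex_cone (κ : Type) [Fintype κ] (t : κ) (k : ℕ)
    (hk : Fintype.card κ = k) :
    Nat.card (CutIndex κ t) = 2 ^ (k - 1) - 1 ∧
    (0 : CutIndex κ t → ℝ) ∈ MTCVSet κ t ∧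
    (∀ m ∈ MTCVSet κ t, ∀ a : ℝ, 0 ≤ a → a • m ∈ MTCVSet κ t) ∧
    (∀ m₁ ∈ MTCVSet κ t, ∀ m₂ ∈ MTCVSet κ t, m₁ + m₂ ∈ MTCVSet κ t) := by
  subst hk
  refine ⟨card_cutIndex κ t, ⟨WeightedGraph.zeroGraph κ, ?_⟩, ?_, ?_⟩
  · funext U
    refine (WeightedGraph.termCut_eq _ _ 0 ?_ ?_).symm
    · obtain ⟨A, hA⟩ := (WeightedGraph.zeroGraph κ).cutSets_nonempty U.1
      exact ⟨A, hA, WeightedGraph.zeroGraph_cutval κ A⟩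
    · intro A _
      exact (WeightedGraph.zeroGraph_cutval κ A).ge
  · rintro m ⟨G, rfl⟩ a ha
    exact ⟨G.scale a ha, funext fun U => (G.scale_termCut a ha U.1).symm⟩
  · rintro m₁ ⟨G, rfl⟩ m₂ ⟨H, rfl⟩
    exact ⟨G.glue H, funext fun U => (G.glue_termCut H U.1).symm⟩
end

section
/- Fix a finite terminal set K of size k ≥ 2 and set p = 2^{k−1}−1. The convex cone M_k of minimum terminal cut vectors of weighted graphs with terminal set K is full-dimensional in ℝ^p: its affine span is all of ℝ^p (equivalently, M_k has nonempty interior, i.e. nonzero p-dimensional volume). -/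
open scoped Classical

/-- Star capacities: the centre `none` is joined to the terminal `some x` with weight `w x`. -/
noncomputable def starCap {κ : Type} (w : κ → ℝ) : Option κ → Option κ → ℝ
  | none, some x => w x
  | some x, none => w x
  | _, _ => 0

/-- The star graph with weights `w`. -/
noncomputable def starGraph {κ : Type} [Fintype κ] (w : κ → ℝ) (hw : ∀ x, 0 ≤ w x) :
    WeightedGraph κ where
  V := Option κ
  ι := Function.Embedding.some
  c := starCap w
  symm := by rintro (_ | u) (_ | v) <;> rfl
  nonneg := by rintro (_ | u) (_ | v) <;> simp [starCap, hw]

theorem starCut {κ : Type} [Fintype κ] (w : κ → ℝ) (A B : Finset (Option κ)) (U : Finset κ)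
    (hB : ∀ v, v ∈ B ↔ v ∉ A) (h : ∀ x : κ, some x ∈ A ↔ x ∈ U) :
    ∑ u ∈ A, ∑ v ∈ B, starCap w u v
      = if none ∈ A then ∑ x ∈ Uᶜ, w x else ∑ x ∈ U, w x := by
  have hc : ∀ x : κ, some x ∈ B ↔ x ∈ Uᶜ := by simp [h, hB]
  have e : ∀ (B : Finset (Option κ)) (W : Finset κ), (∀ x : κ, some x ∈ B ↔ x ∈ W) →
      ∀ f : Option κ → ℝ,
      ∑ u ∈ B, f u = (if none ∈ B then f none else 0) + ∑ x ∈ W, f (some x) := by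
    intro B W hBW f
    rw [← Finset.univ_inter B, ← Finset.univ_inter W, ← Finset.sum_ite_mem,
      ← Finset.sum_ite_mem, Fintype.sum_option]
    simp only [hBW, Finset.univ_inter]
  rw [e A U h]
  simp only [e B Uᶜ hc]
  by_cases hn : none ∈ A <;> simp [hn, hB, starCap]

theorem mem_cutSets_iff {κ : Type} (G : WeightedGraph κ) (U : Finset κ) (A : Finset G.V) :
    A ∈ G.cutSets U ↔ ∀ x : κ, G.ι x ∈ A ↔ x ∈ U := by
  simp [WeightedGraph.cutSets]

theorem exists_cutval_eq {κ : Type} (G : WeightedGraph κ) (A : Finset G.V) :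
    ∃ B : Finset G.V, (∀ v, v ∈ B ↔ v ∉ A) ∧ G.cutval A = ∑ u ∈ A, ∑ v ∈ B, G.c u v :=
  ⟨Aᶜ, fun _ => Finset.mem_compl, rfl⟩

theorem starGraph_termCut {κ : Type} [Fintype κ] (w : κ → ℝ) (hw : ∀ x, 0 ≤ w x)
    (U : Finset κ) :
    (starGraph w hw).termCut U = min (∑ x ∈ U, w x) (∑ x ∈ Uᶜ, w x) := by
  have key : ∀ A : Finset (Option κ), (∀ x : κ, some x ∈ A ↔ x ∈ U) →
      (starGraph w hw).cutval A = if none ∈ A then ∑ x ∈ Uᶜ, w x else ∑ x ∈ U, w x := by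
    intro A h
    obtain ⟨B, hB, e⟩ := exists_cutval_eq (starGraph w hw) A
    exact e.trans (starCut w A B U hB h)
  have hmem : ∀ A : Finset (Option κ), A ∈ (starGraph w hw).cutSets U ↔
      ∀ x : κ, some x ∈ A ↔ x ∈ U := by
    intro A
    exact mem_cutSets_iff (starGraph w hw) U A
  unfold WeightedGraph.termCut
  apply le_antisymm
  · apply le_min
    · have h : ∀ x : κ, some x ∈ U.map Function.Embedding.some ↔ x ∈ U := by simp
      refine (Finset.inf'_le _ ((hmem _).2 h)).trans ?_
      rw [key _ h]; simp
    · have h : ∀ x : κ, some x ∈ Finset.insertNone U ↔ x ∈ U := by simp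
      refine (Finset.inf'_le _ ((hmem _).2 h)).trans ?_
      rw [key _ h]; simp
  · apply Finset.le_inf'
    intro A hA
    rw [key A ((hmem A).1 hA)]
    split_ifs
    · exact min_le_right _ _
    · exact min_le_left _ _

/-- Weight `1` on `S`, weight `a` on `t`. -/
noncomputable def starWt {κ : Type} (t : κ) (S : Finset κ) (a : ℝ) : κ → ℝ :=
  fun x => (if x ∈ S then 1 else 0) + (if x = t then a else 0)

theorem starWt_nonneg {κ : Type} (t : κ) (S : Finset κ) (a : ℝ) (ha : 0 ≤ a) (x : κ) :
    0 ≤ starWt t S a x := by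
  unfold starWt
  split_ifs <;> linarith

theorem starWt_termCut {κ : Type} [Fintype κ] (t : κ) (S : Finset κ) (a : ℝ) (ha : 0 ≤ a)
    (U : Finset κ) (hU : t ∉ U) :
    (starGraph (starWt t S a) (starWt_nonneg t S a ha)).termCut U
      = min ((U ∩ S).card : ℝ) ((S.card : ℝ) - (U ∩ S).card + a) := by
  rw [starGraph_termCut]
  have h1 : ∑ x ∈ U, starWt t S a x = ((U ∩ S).card : ℝ) := by
    simp [starWt, Finset.sum_add_distrib, hU]
  have h2 : ∑ x, starWt t S a x = (S.card : ℝ) + a := by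
    simp [starWt, Finset.sum_add_distrib]
  have h3 := Finset.sum_add_sum_compl U (starWt t S a)
  have h4 : ∑ x ∈ Uᶜ, starWt t S a x = (S.card : ℝ) - (U ∩ S).card + a := by linarith
  rw [h1, h4]

theorem indicator_mem {κ : Type} [Fintype κ] (t : κ) (S : CutIndex κ t) :
    (fun U : CutIndex κ t => if S.1 ⊆ U.1 then (1 : ℝ) else 0)
      ∈ vectorSpan ℝ (MTCVSet κ t) := by
  have hS : (1 : ℝ) ≤ S.1.card := by exact_mod_cast S.2.1.card_pos
  have ha : (0 : ℝ) ≤ (S.1.card : ℝ) - 1 := by linarith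
  have hb : (0 : ℝ) ≤ (S.1.card : ℝ) := by linarith
  have := vsub_mem_vectorSpan ℝ (s := MTCVSet κ t)
    ⟨starGraph (starWt t S.1 _) (starWt_nonneg t S.1 _ hb), rfl⟩
    ⟨starGraph (starWt t S.1 _) (starWt_nonneg t S.1 _ ha), rfl⟩
  convert this using 1
  funext U
  change _ = mtcv _ t U - mtcv _ t U
  unfold mtcv
  rw [starWt_termCut _ _ _ hb _ U.2.2, starWt_termCut _ _ _ ha _ U.2.2]
  split_ifs with h
  · rw [Finset.inter_eq_right.2 h, min_eq_left (by linarith), min_eq_right (by linarith)]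
    ring
  · have hlt : (U.1 ∩ S.1).card < S.1.card := by
      apply Finset.card_lt_card
      refine ⟨Finset.inter_subset_right, fun h' => h (h'.trans Finset.inter_subset_left)⟩
    have hlt' : ((U.1 ∩ S.1).card : ℝ) + 1 ≤ S.1.card := by exact_mod_cast hlt
    rw [min_eq_left (by linarith), min_eq_left (by linarith)]
    ring

theorem single_mem {κ : Type} [Fintype κ] (t : κ) (n : ℕ) : ∀ S : CutIndex κ t,
    S.1ᶜ.card = n → (fun U : CutIndex κ t => if U = S then (1 : ℝ) else 0)
      ∈ vectorSpan ℝ (MTCVSet κ t) := by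
  have : Fintype (CutIndex κ t) := by unfold CutIndex; infer_instance
  induction n using Nat.strong_induction_on with
  | _ n ih =>
    intro S hS
    have hsum : ∑ T ∈ Finset.univ.filter (fun T : CutIndex κ t => S.1 ⊂ T.1),
        (fun U : CutIndex κ t => if U = T then (1 : ℝ) else 0)
        ∈ vectorSpan ℝ (MTCVSet κ t) := by
      apply Submodule.sum_mem
      intro T hT
      have hT' : S.1 ⊂ T.1 := (Finset.mem_filter.1 hT).2
      refine ih _ ?_ T rfl
      rw [← hS]
      exact Finset.card_lt_card (Finset.compl_ssubset_compl.2 hT')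
    convert Submodule.sub_mem _ (indicator_mem t S) hsum using 1
    funext U
    rw [Pi.sub_apply, Finset.sum_apply, Finset.sum_ite_eq]
    by_cases h : U = S
    · subst h; simp
    · have hne : S.1 ≠ U.1 := fun h' => h (Subtype.ext h'.symm)
      by_cases h2 : S.1 ⊆ U.1
      · simp [h, h2, h2.ssubset_of_ne hne]
      · have : ¬ S.1 ⊂ U.1 := fun h' => h2 h'.subset
        simp [h, h2, this]

/-- for `k ≥ 2` the convex cone `M_k` of minimum terminal cut vectors is
full-dimensional in `ℝ^p`, `p = 2^(k-1) - 1`: its affine span is all of `ℝ^p`. -/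
theorem mtcvSet_full_dimensional (κ : Type) [Fintype κ] (t : κ)
    (hk : 2 ≤ Fintype.card κ) :
    affineSpan ℝ (MTCVSet κ t) = ⊤ := by
  have : Fintype (CutIndex κ t) := by unfold CutIndex; infer_instance
  rw [AffineSubspace.affineSpan_eq_top_iff_vectorSpan_eq_top_of_nonempty]
  · rw [eq_top_iff]
    intro f _
    have : f = ∑ S, f S • (fun U : CutIndex κ t => if U = S then (1 : ℝ) else 0) := by
      funext U
      simp [Finset.sum_apply]
    rw [this]
    exact Submodule.sum_mem _ fun S _ => Submodule.smul_mem _ _ (single_mem t _ S rfl)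
  · exact ⟨_, starGraph (fun _ => 0) (fun _ => le_rfl), rfl⟩
end
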